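/- Let P = {p₁, p₂, p₃, p₄} be a quadruple of distinct points such that p_i lies in the closed quadrant Q_i for i = 1, 2, 3, 4. If P is concave-obtuse, then P is upward, downward, leftward, or rightward. -/

import Mathlib

open EuclideanGeometry Real

noncomputable section

abbrev Plane := EuclideanSpace ℝ (Fin 2)

/-- The four closed quadrants of the plane. -/
def InQ1 (p : Plane) : Prop := 0 ≤ p 0 ∧ 0 ≤ p 1
def InQ2 (p : Plane) : Prop := p 0 ≤ 0 ∧ 0 ≤ p 1
def InQ3 (p : Plane) : Prop := p 0 ≤ 0 ∧ p 1 ≤ 0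
def InQ4 (p : Plane) : Prop := 0 ≤ p 0 ∧ p 1 ≤ 0

/-- A quadruple is concave-obtuse: one of the points (the center) lies in the interior of the
triangle formed by the other three, and all three angles at the center formed by connecting
the center to the other three points are greater than `π/2`. -/
def ConcaveObtuse (p₁ p₂ p₃ p₄ : Plane) : Prop :=
  ∃ c a b d : Plane, ({c, a, b, d} : Set Plane) = ({p₁, p₂, p₃, p₄} : Set Plane) ∧
    c ∈ interior (convexHull ℝ ({a, b, d} : Set Plane)) ∧
    π / 2 < EuclideanGeometry.angle a c b ∧ π / 2 < EuclideanGeometry.angle a c d ∧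
    π / 2 < EuclideanGeometry.angle b c d

/-- The path `p₂p₄p₃p₁` is acute. -/
def Upward (p₁ p₂ p₃ p₄ : Plane) : Prop :=
  EuclideanGeometry.angle p₂ p₄ p₃ ≤ π / 2 ∧ EuclideanGeometry.angle p₄ p₃ p₁ ≤ π / 2

/-- The path `p₃p₁p₂p₄` is acute. -/
def Downward (p₁ p₂ p₃ p₄ : Plane) : Prop :=
  EuclideanGeometry.angle p₃ p₁ p₂ ≤ π / 2 ∧ EuclideanGeometry.angle p₁ p₂ p₄ ≤ π / 2

/-- The path `p₂p₄p₁p₃` is acute. -/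
def Leftward (p₁ p₂ p₃ p₄ : Plane) : Prop :=
  EuclideanGeometry.angle p₂ p₄ p₁ ≤ π / 2 ∧ EuclideanGeometry.angle p₄ p₁ p₃ ≤ π / 2

/-- The path `p₁p₃p₂p₄` is acute. -/
def Rightward (p₁ p₂ p₃ p₄ : Plane) : Prop :=
  EuclideanGeometry.angle p₁ p₃ p₂ ≤ π / 2 ∧ EuclideanGeometry.angle p₃ p₂ p₄ ≤ π / 2

/-!
A triangle has at most one non-acute angle. Let `c` be the center, `o` the point labelled by the
quadrant opposite to that of `c`, and `x`, `y` the other two points. The triangles `c o x` and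
`c o y` are obtuse at `c`, so their angles at `o` are acute, while the triangle `o x y` has an angle
of at most `π / 2` at `x` or at `y`. Hence one of the paths `c o x y` and `c o y x` is acute. For
each label of the center these two paths, up to reversal, are among the four that define the
directions.
-/

section EuclideanSpace

variable {V P : Type*} [NormedAddCommGroup V] [InnerProductSpace ℝ V] [MetricSpace P]
  [NormedAddTorsor V P]

theorem angle_lt_pi_div_two_of_pi_div_two_lt_angle {a b c : P} (h : π / 2 < ∠ a b c) :
    ∠ b c a < π / 2 := by
  have hba : b ≠ a := by
    rintro rfl
    simp at h
  have hsum : ∠ a b c + ∠ b c a + ∠ c a b = π := angle_add_angle_add_angle_eq_pi c hba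
  linarith [angle_nonneg c a b]

theorem angle_le_pi_div_two_or_angle_le_pi_div_two (a b c : P) :
    ∠ a b c ≤ π / 2 ∨ ∠ b c a ≤ π / 2 :=
  (le_or_gt (∠ a b c) (π / 2)).imp_right fun h ↦
    (angle_lt_pi_div_two_of_pi_div_two_lt_angle h).le

/-- The polygonal path `a b c d` is acute, where right angles count as acute. -/
def IsAcutePath (a b c d : P) : Prop :=
  ∠ a b c ≤ π / 2 ∧ ∠ b c d ≤ π / 2

theorem IsAcutePath.reverse {a b c d : P} (h : IsAcutePath a b c d) : IsAcutePath d c b a :=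
  ⟨angle_comm b c d ▸ h.2, angle_comm a b c ▸ h.1⟩

theorem isAcutePath_or_isAcutePath_of_pi_div_two_lt_angle {c o x y : P}
    (hx : π / 2 < ∠ x c o) (hy : π / 2 < ∠ y c o) :
    IsAcutePath c o x y ∨ IsAcutePath c o y x := by
  have hcox : ∠ c o x ≤ π / 2 := (angle_lt_pi_div_two_of_pi_div_two_lt_angle hx).le
  have hcoy : ∠ c o y ≤ π / 2 := (angle_lt_pi_div_two_of_pi_div_two_lt_angle hy).le
  rcases angle_le_pi_div_two_or_angle_le_pi_div_two o x y with hoxy | hxyo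
  · exact Or.inl ⟨hcox, hoxy⟩
  · exact Or.inr ⟨hcoy, angle_comm x y o ▸ hxyo⟩

/-- The point `c` of `s` sees any two other points of `s` at an obtuse angle. For four points in the
plane, this is the condition on the angles at the center of a concave-obtuse quadruple. -/
def IsObtuseCenter (c : P) (s : Set P) : Prop :=
  c ∈ s ∧ (s \ {c}).Pairwise fun x y ↦ π / 2 < ∠ x c y

theorem IsObtuseCenter.isAcutePath_or_isAcutePath {c o x y : P} {s : Set P}
    (h : IsObtuseCenter c s) (ho : o ∈ s \ {c}) (hx : x ∈ s \ {c}) (hy : y ∈ s \ {c})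
    (hxo : x ≠ o) (hyo : y ≠ o) : IsAcutePath c o x y ∨ IsAcutePath c o y x :=
  isAcutePath_or_isAcutePath_of_pi_div_two_lt_angle (h.2 hx ho hxo) (h.2 hy ho hyo)

theorem isObtuseCenter_of_pi_div_two_lt_angle {a b c d : P} (hab : π / 2 < ∠ a c b)
    (had : π / 2 < ∠ a c d) (hbd : π / 2 < ∠ b c d) : IsObtuseCenter c {c, a, b, d} := by
  have : Std.Symm fun x y : P ↦ π / 2 < ∠ x c y := ⟨fun x y h ↦ angle_comm x c y ▸ h⟩
  have hpairwise : ({a, b, d} : Set P).Pairwise fun x y ↦ π / 2 < ∠ x c y := by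
    simp [Set.pairwise_insert_of_symm, hab, had, hbd]
  exact ⟨Set.mem_insert _ _, hpairwise.mono (Set.sdiff_singleton_subset_iff.2 subset_rfl)⟩

theorem concaveObtuse_quadruple_direction_general {p₁ p₂ p₃ p₄ : P}
    (hne : p₁ ≠ p₂ ∧ p₁ ≠ p₃ ∧ p₁ ≠ p₄ ∧ p₂ ≠ p₃ ∧ p₂ ≠ p₄ ∧ p₃ ≠ p₄)
    (h : ∃ c, IsObtuseCenter c {p₁, p₂, p₃, p₄}) :
    IsAcutePath p₂ p₄ p₃ p₁ ∨ IsAcutePath p₃ p₁ p₂ p₄ ∨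
    IsAcutePath p₂ p₄ p₁ p₃ ∨ IsAcutePath p₁ p₃ p₂ p₄ := by
  obtain ⟨c, hc⟩ := h
  have hpath (o x y : P) := hc.isAcutePath_or_isAcutePath (o := o) (x := x) (y := y)
  rcases hc.1 with hc₁ | hc₂ | hc₃ | hc₄ <;> subst c
  · have : IsAcutePath p₁ p₃ p₂ p₄ ∨ IsAcutePath p₁ p₃ p₄ p₂ := by apply hpath <;> grind
    exact this.elim (.inr ∘ .inr ∘ .inr) (.inl ∘ .reverse)
  · have : IsAcutePath p₂ p₄ p₁ p₃ ∨ IsAcutePath p₂ p₄ p₃ p₁ := by apply hpath <;> grind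
    exact this.elim (.inr ∘ .inr ∘ .inl) .inl
  · have : IsAcutePath p₃ p₁ p₂ p₄ ∨ IsAcutePath p₃ p₁ p₄ p₂ := by apply hpath <;> grind
    exact this.elim (.inr ∘ .inl) (.inr ∘ .inr ∘ .inl ∘ .reverse)
  · have : IsAcutePath p₄ p₂ p₁ p₃ ∨ IsAcutePath p₄ p₂ p₃ p₁ := by apply hpath <;> grind
    exact this.elim (.inr ∘ .inl ∘ .reverse) (.inr ∘ .inr ∘ .inr ∘ .reverse)

end EuclideanSpace

theorem ConcaveObtuse.exists_isObtuseCenter {p₁ p₂ p₃ p₄ : Plane}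
    (h : ConcaveObtuse p₁ p₂ p₃ p₄) : ∃ c, IsObtuseCenter c {p₁, p₂, p₃, p₄} := by
  obtain ⟨c, a, b, d, hset, -, hab, had, hbd⟩ := h
  exact ⟨c, hset ▸ isObtuseCenter_of_pi_div_two_lt_angle hab had hbd⟩

/-- A concave-obtuse quadruple with one point in each closed quadrant is upward, downward,
leftward, or rightward. -/
theorem concaveObtuse_quadruple_direction
    (p₁ p₂ p₃ p₄ : Plane)
    (hne : p₁ ≠ p₂ ∧ p₁ ≠ p₃ ∧ p₁ ≠ p₄ ∧ p₂ ≠ p₃ ∧ p₂ ≠ p₄ ∧ p₃ ≠ p₄)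
    (h1 : InQ1 p₁) (h2 : InQ2 p₂) (h3 : InQ3 p₃) (h4 : InQ4 p₄)
    (h : ConcaveObtuse p₁ p₂ p₃ p₄) :
    Upward p₁ p₂ p₃ p₄ ∨ Downward p₁ p₂ p₃ p₄ ∨
    Leftward p₁ p₂ p₃ p₄ ∨ Rightward p₁ p₂ p₃ p₄ :=
  concaveObtuse_quadruple_direction_general hne h.exists_isObtuseCenter
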